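/- Let a and b be nonzero rational numbers. The set of places v of Q (primes p together with the real place) such that the equation z^2 = a*x^2 + b*y^2 has only the trivial solution x = y = z = 0 over the completion Q_v is finite and has even cardinality. -/

import Mathlib

/-!
The set of bad places does not change when `a` and `b` are multiplied by nonzero squares, so they
may be taken to be nonzero integers. At each prime `p` write `a = p ^ m * u`, `b = p ^ n * v` with
`u`, `v` prime to `p`. The closed formula `hilbertSym p a b = ±1` in terms of `m, n, u, v` is
bimultiplicative by inspection, and it equals `1` exactly when the conic `z² = a x² + b y²` has a
nontrivial point over `ℚ_p` (`conicSol_iff_hilbertSym`).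

For that equivalence only the parities of `m` and `n` matter. If both are even, a point exists for
odd `p` by counting squares mod `p` and Hensel's lemma, and for `p = 2` unless `u ≡ v ≡ 3` mod `4`.
If `m` is odd and `n` even, a primitive solution reduced mod `p` (mod `8` for `p = 2`) gives
the necessary condition, and Hensel's lemma shows that it suffices. If both are odd, the rotation
`(a, b) ↦ (b, -ab)` (`ConicSol.rotate_iff`) leads back to the previous case.

The number of bad places is then even if and only if the product of the symbols over all places is
`1` (`ProductFormula`). By bimultiplicativity this has to be checked only for `a`, `b` equal to `-1`
or a prime, where it is quadratic reciprocity for two distinct odd primes and the two supplementary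
laws in the remaining nontrivial cases.
-/

/-! ### Conics over a field -/

/-- The conic `z² = a x² + b y²` has a nontrivial point over `K`. -/
def ConicSol {K : Type*} [Field K] (a b : K) : Prop :=
  ∃ x y z : K, z ^ 2 = a * x ^ 2 + b * y ^ 2 ∧ ¬(x = 0 ∧ y = 0 ∧ z = 0)

namespace ConicSol

variable {K : Type*} [Field K] {a b c : K}

theorem symm (h : ConicSol a b) : ConicSol b a := by
  obtain ⟨x, y, z, h, hn⟩ := h
  exact ⟨y, x, z, by rw [h]; ring, by tauto⟩

theorem comm : ConicSol a b ↔ ConicSol b a := ⟨symm, symm⟩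

theorem of_sq_left (hc : c ≠ 0) (h : ConicSol (a * c ^ 2) b) : ConicSol a b := by
  obtain ⟨x, y, z, h, hn⟩ := h
  exact ⟨c * x, y, z, by rw [h]; ring, by simpa [hc] using hn⟩

theorem sq_left (hc : c ≠ 0) : ConicSol (a * c ^ 2) b ↔ ConicSol a b := by
  refine ⟨of_sq_left hc, fun h => ?_⟩
  refine of_sq_left (c := c⁻¹) (inv_ne_zero hc) ?_
  have : a * c ^ 2 * c⁻¹ ^ 2 = a := by field_simp
  rwa [this]

theorem sq_right (hc : c ≠ 0) : ConicSol a (b * c ^ 2) ↔ ConicSol a b := by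
  rw [comm, sq_left hc, comm]

/-- Multiplying the equation by `b` gives `(b y)² = b z² - a b x²`. -/
theorem rotate (hb : b ≠ 0) (h : ConicSol a b) : ConicSol b (-(a * b)) := by
  obtain ⟨x, y, z, h, hn⟩ := h
  refine ⟨z, x, b * y, by rw [h]; ring, ?_⟩
  simp only [mul_eq_zero, hb, false_or]
  tauto

/-- The rotation `(a, b) ↦ (b, -ab)` has order three up to squares, hence is reversible. -/
theorem rotate_iff (ha : a ≠ 0) (hb : b ≠ 0) : ConicSol a b ↔ ConicSol b (-(a * b)) := by
  refine ⟨rotate hb, fun h => ?_⟩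
  have h1 := rotate (neg_ne_zero.2 (mul_ne_zero ha hb)) h
  have e1 : -(b * -(a * b)) = a * b ^ 2 := by ring
  rw [e1, sq_right hb] at h1
  have h2 := rotate ha h1
  have e2 : -(-(a * b) * a) = b * a ^ 2 := by ring
  rwa [e2, sq_right ha] at h2

end ConicSol

/-! ### Solvability over `ℚ_p` for valuations zero and one -/

section Local

variable {p : ℕ} [Fact p.Prime]

/-- Hensel's lemma for `X² - n`. -/
theorem padic_exists_sqrt {n a : ℤ_[p]} (h : ‖a ^ 2 - n‖ < ‖2 * a‖ ^ 2) :
    ∃ z : ℤ_[p], z ^ 2 = n := by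
  have := hensels_lemma (p := p) (F := (Polynomial.X ^ 2 - Polynomial.C n : Polynomial ℤ_[p]))
    (a := a) (by simpa [Polynomial.derivative_X_pow, one_add_one_eq_two] using h)
  obtain ⟨z, hz, -⟩ := this
  exact ⟨z, by simpa [sub_eq_zero] using hz⟩

theorem int_cast_zmod_ne_zero {u : ℤ} (hu : ¬ (p : ℤ) ∣ u) : (u : ZMod p) ≠ 0 := by
  rwa [Ne, ZMod.intCast_zmod_eq_zero_iff_dvd]

theorem padic_sqrt_of_odd (hp : p ≠ 2) {n a : ℤ} (hn : ¬ (p : ℤ) ∣ n) (h : (p : ℤ) ∣ a ^ 2 - n) :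
    ∃ z : ℤ_[p], z ^ 2 = n := by
  have pp : Prime (p : ℤ) := Nat.prime_iff_prime_int.1 Fact.out
  have h2a : ¬ (p : ℤ) ∣ 2 * a := by
    intro hd
    rcases pp.dvd_or_dvd hd with h2 | h2
    · have : p ∣ 2 := by exact_mod_cast h2
      exact hp ((Nat.prime_dvd_prime_iff_eq Fact.out Nat.prime_two).1 this)
    · exact hn ((dvd_sub_right (dvd_pow h2 two_ne_zero)).1 h)
  apply padic_exists_sqrt (a := (a : ℤ_[p]))
  have e1 : ‖((2 * a : ℤ) : ℤ_[p])‖ = 1 := by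
    refine le_antisymm (PadicInt.norm_le_one _) (not_lt.1 ?_)
    rwa [PadicInt.norm_int_lt_one_iff_dvd]
  have e2 : ‖((a ^ 2 - n : ℤ) : ℤ_[p])‖ < 1 := by
    rwa [PadicInt.norm_int_lt_one_iff_dvd]
  push_cast at e1 e2
  rw [e1]; simpa using e2

theorem padic_sqrt_two {n : ℤ} (h : n % 8 = 1) : ∃ z : ℤ_[2], z ^ 2 = n := by
  apply padic_exists_sqrt (a := 1)
  have e2 : ‖((1 - n : ℤ) : ℤ_[2])‖ ≤ (2 : ℕ) ^ (-(3 : ℕ) : ℤ) := by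
    rw [PadicInt.norm_int_le_pow_iff_dvd]
    norm_num; omega
  have e3 : ‖((2 : ℕ) : ℤ_[2])‖ = ((2 : ℕ) : ℝ)⁻¹ := PadicInt.norm_p
  push_cast at e2 e3
  rw [mul_one, e3]
  norm_num at e2 ⊢
  linarith

/-- A nontrivial solution can be rescaled to an integral one with a coordinate equal to `1`. -/
theorem ConicSol.primitive {a b : ℤ} (h : ConicSol (a : ℚ_[p]) b) :
    ∃ x y z : ℤ_[p], z ^ 2 = a * x ^ 2 + b * y ^ 2 ∧ (x = 1 ∨ y = 1 ∨ z = 1) := by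
  obtain ⟨x, y, z, h, hn⟩ := h
  have key : ∀ m : ℚ_[p], m ≠ 0 → ‖x‖ ≤ ‖m‖ → ‖y‖ ≤ ‖m‖ → ‖z‖ ≤ ‖m‖ →
      (m = x ∨ m = y ∨ m = z) →
      ∃ x y z : ℤ_[p], z ^ 2 = a * x ^ 2 + b * y ^ 2 ∧ (x = 1 ∨ y = 1 ∨ z = 1) := by
    intro m hm hx hy hz hc
    have hd : ∀ t : ℚ_[p], ‖t‖ ≤ ‖m‖ → ‖t / m‖ ≤ 1 := fun t ht => by
      rw [norm_div]; exact div_le_one_of_le₀ ht (norm_nonneg _)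
    refine ⟨⟨x / m, hd x hx⟩, ⟨y / m, hd y hy⟩, ⟨z / m, hd z hz⟩, ?_, ?_⟩
    · apply Subtype.ext
      simp only [PadicInt.coe_add, PadicInt.coe_mul, PadicInt.coe_intCast]
      show (z / m) ^ 2 = a * (x / m) ^ 2 + b * (y / m) ^ 2
      field_simp
      exact h
    · rcases hc with rfl | rfl | rfl
      · left; apply Subtype.ext; simp [hm]
      · right; left; apply Subtype.ext; simp [hm]
      · right; right; apply Subtype.ext; simp [hm]
  have hne : ∀ m t : ℚ_[p], t ≠ 0 → ‖t‖ ≤ ‖m‖ → m ≠ 0 := by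
    rintro m t ht htm rfl
    simp at htm; exact ht htm
  have hn' : x ≠ 0 ∨ y ≠ 0 ∨ z ≠ 0 := by tauto
  obtain ⟨m, hc, hx, hy, hz⟩ : ∃ m, (m = x ∨ m = y ∨ m = z) ∧
      ‖x‖ ≤ ‖m‖ ∧ ‖y‖ ≤ ‖m‖ ∧ ‖z‖ ≤ ‖m‖ := by
    rcases le_total ‖x‖ ‖y‖ with h1 | h1 <;> rcases le_total ‖y‖ ‖z‖ with h2 | h2 <;>
      rcases le_total ‖x‖ ‖z‖ with h3 | h3
    · exact ⟨z, by simp, by simp [*]⟩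
    · exact ⟨z, by simp, h1.trans h2, h2, le_rfl⟩
    · exact ⟨y, by simp, by simp [*]⟩
    · exact ⟨y, by simp, by simp [*]⟩
    · exact ⟨z, by simp, by simp [*]⟩
    · exact ⟨x, by simp, by simp [*]⟩
    · exact ⟨x, by simp, le_rfl, h1, h2.trans h1⟩
    · exact ⟨x, by simp, by simp [*]⟩
  refine key m ?_ hx hy hz hc
  rcases hn' with h0 | h0 | h0
  · exact hne _ _ h0 hx
  · exact hne _ _ h0 hy
  · exact hne _ _ h0 hz

/-- A point with integral `x`, `y` is obtained from a square root of `a x² + b y²`. -/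
theorem ConicSol.of_sqrt {a b x y : ℤ} (hxy : x ≠ 0 ∨ y ≠ 0)
    (h : ∃ z : ℤ_[p], z ^ 2 = ((a * x ^ 2 + b * y ^ 2 : ℤ) : ℤ_[p])) :
    ConicSol (a : ℚ_[p]) b := by
  obtain ⟨z, hz⟩ := h
  refine ⟨x, y, z, by exact_mod_cast congrArg ((↑) : ℤ_[p] → ℚ_[p]) hz, ?_⟩
  simp only [Int.cast_eq_zero]
  tauto

/-- `u x² + v y²` represents `1` mod `p`, and a `p`-adic integer congruent to `1` is a square. -/
theorem conicSol_odd_unit_unit (hp : p ≠ 2) {u v : ℤ} (hu : ¬ (p : ℤ) ∣ u) (hv : ¬ (p : ℤ) ∣ v) :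
    ConicSol (u : ℚ_[p]) v := by
  have hu' := int_cast_zmod_ne_zero hu
  have hv' := int_cast_zmod_ne_zero hv
  obtain ⟨x, y, hxy⟩ := FiniteField.exists_root_sum_quadratic (R := ZMod p)
    (f := Polynomial.C (u : ZMod p) * Polynomial.X ^ 2 + Polynomial.C 0 * Polynomial.X
      + Polynomial.C (-1))
    (g := Polynomial.C (v : ZMod p) * Polynomial.X ^ 2 + Polynomial.C 0 * Polynomial.X
      + Polynomial.C 0)
    (Polynomial.degree_quadratic hu') (Polynomial.degree_quadratic hv')
    (by rw [ZMod.card]; exact (Fact.out : p.Prime).mod_two_eq_one_iff_ne_two.2 hp)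
  obtain ⟨x, rfl⟩ := ZMod.intCast_surjective x
  obtain ⟨y, rfl⟩ := ZMod.intCast_surjective y
  have h1 : ((u * x ^ 2 + v * y ^ 2 : ℤ) : ZMod p) = 1 := by
    push_cast
    simp at hxy
    linear_combination hxy
  have hnd : ¬ (p : ℤ) ∣ u * x ^ 2 + v * y ^ 2 := by
    rw [← ZMod.intCast_zmod_eq_zero_iff_dvd, h1]; exact one_ne_zero
  refine ConicSol.of_sqrt (x := x) (y := y) ?_ (padic_sqrt_of_odd hp (a := 1) hnd ?_)
  · by_contra! hc
    apply hnd; simp [hc.1, hc.2]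
  · rw [← ZMod.intCast_zmod_eq_zero_iff_dvd, Int.cast_sub, h1]; simp

theorem padicInt_toZMod_eq_zero_iff (x : ℤ_[p]) : PadicInt.toZMod x = 0 ↔ (p : ℤ_[p]) ∣ x := by
  rw [← RingHom.mem_ker, PadicInt.ker_toZMod, PadicInt.maximalIdeal_eq_span_p,
    Ideal.mem_span_singleton]

/-- In a primitive solution `y` is a unit: otherwise `p` divides `z`, hence `p²` divides `p u x²`,
and `p` divides all coordinates. So `v` is a square mod `p`. -/
theorem conicSol_odd_p_unit (hp : p ≠ 2) {u v : ℤ} (hu : ¬ (p : ℤ) ∣ u) (hv : ¬ (p : ℤ) ∣ v) :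
    ConicSol ((p * u : ℤ) : ℚ_[p]) v ↔ jacobiSym v p = 1 := by
  have hu' := int_cast_zmod_ne_zero hu
  have hv' := int_cast_zmod_ne_zero hv
  rw [← jacobiSym.legendreSym.to_jacobiSym, legendreSym.eq_one_iff p hv']
  constructor
  · intro h
    obtain ⟨x, y, z, h, h1⟩ := h.primitive
    have hz := congrArg (PadicInt.toZMod (p := p)) h
    simp only [map_add, map_mul, map_pow, map_intCast, Int.cast_mul, Int.cast_natCast,
      map_natCast, CharP.cast_eq_zero, zero_mul, zero_add] at hz
    by_cases hy : PadicInt.toZMod y = 0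
    · exfalso
      have hz0 : PadicInt.toZMod z = 0 := by
        rw [hy] at hz; simpa using hz
      obtain ⟨y', rfl⟩ := (padicInt_toZMod_eq_zero_iff y).1 hy
      obtain ⟨z', rfl⟩ := (padicInt_toZMod_eq_zero_iff z).1 hz0
      have hp0 : (p : ℤ_[p]) ≠ 0 := by exact_mod_cast (Fact.out : p.Prime).ne_zero
      have h2 : (p : ℤ_[p]) * z' ^ 2 = u * x ^ 2 + v * p * y' ^ 2 := by
        apply mul_left_cancel₀ hp0
        push_cast at h
        linear_combination h
      have h3 := congrArg (PadicInt.toZMod (p := p)) h2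
      simp only [map_add, map_mul, map_pow, map_intCast,
        map_natCast, CharP.cast_eq_zero, zero_mul, mul_zero, add_zero] at h3
      have hx : PadicInt.toZMod x = 0 := by
        have := h3.symm
        simpa [hu'] using this
      rcases h1 with h1 | h1 | h1
      · rw [h1] at hx; simp at hx
      · rw [h1] at hy; simp at hy
      · rw [h1] at hz0; simp at hz0
    · refine ⟨PadicInt.toZMod z / PadicInt.toZMod y, ?_⟩
      field_simp
      linear_combination -hz
  · rintro ⟨r, hr⟩
    obtain ⟨r, rfl⟩ := ZMod.intCast_surjective r
    have hd : (p : ℤ) ∣ r ^ 2 - v := by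
      rw [← ZMod.intCast_zmod_eq_zero_iff_dvd]; push_cast; rw [hr]; ring
    refine ConicSol.of_sqrt (x := 0) (y := 1) (by simp) ?_
    simpa using padic_sqrt_of_odd hp hv hd

theorem conicSol_two_unit_unit {u v : ℤ} (hu : ¬ 2 ∣ u) (hv : ¬ 2 ∣ v) :
    ConicSol (u : ℚ_[2]) v ↔ ¬ (u % 4 = 3 ∧ v % 4 = 3) := by
  have key : ∀ u v : ℤ, u % 4 = 1 → ¬ 2 ∣ v → ConicSol (u : ℚ_[2]) v := by
    intro u v hu hv
    have : u % 8 = 1 ∨ u % 8 = 5 := by omega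
    -- If `u ≡ 5` mod `8`, then `u + 4 v ≡ 1` mod `8` because `v` is odd.
    rcases this with h | h
    · exact ConicSol.of_sqrt (x := 1) (y := 0) (by simp) (padic_sqrt_two (by omega))
    · exact ConicSol.of_sqrt (x := 1) (y := 2) (by simp) (padic_sqrt_two (by omega))
  constructor
  · rintro h ⟨h3, h4⟩
    obtain ⟨x, y, z, h, h1⟩ := h.primitive
    have hz := congrArg (PadicInt.toZModPow (p := 2) 2) h
    have e : ∀ w : ℤ, w % 4 = 3 → ((w : ℤ) : ZMod (2 ^ 2)) = 3 := by
      intro w hw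
      have := (ZMod.intCast_eq_intCast_iff_dvd_sub w 3 (2 ^ 2)).2 (by norm_num; omega)
      simpa using this
    simp only [map_add, map_mul, map_pow, map_intCast, e u h3, e v h4] at hz
    have h1' : PadicInt.toZModPow (p := 2) 2 x = 1 ∨ PadicInt.toZModPow (p := 2) 2 y = 1 ∨
        PadicInt.toZModPow (p := 2) 2 z = 1 := by
      rcases h1 with rfl | rfl | rfl <;> simp
    generalize PadicInt.toZModPow (p := 2) 2 x = X at *
    generalize PadicInt.toZModPow (p := 2) 2 y = Y at *
    generalize PadicInt.toZModPow (p := 2) 2 z = Z at *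
    revert X Y Z
    decide
  · intro h
    by_cases h1 : u % 4 = 1
    · exact key u v h1 hv
    · exact (key v u (by omega) hu).symm

/-- In a primitive solution mod `8`, `y` and `z` are odd, so `v + 2 u X² = 1` with `2 X²` equal to
`0` or `2`. The conditions `u * u = 1`, `v * v = 1` say that `u` and `v` are odd. -/
theorem zmod_eight_fact : ∀ u v X Y Z : ZMod (2 ^ 3),
    u * u = 1 → v * v = 1 → (X = 1 ∨ Y = 1 ∨ Z = 1) → Z ^ 2 = 2 * u * X ^ 2 + v * Y ^ 2 →
    v = 1 ∨ 2 * u + v = 1 := by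
  decide +kernel

theorem conicSol_two_two_unit {u v : ℤ} (hu : ¬ 2 ∣ u) (hv : ¬ 2 ∣ v) :
    ConicSol ((2 * u : ℤ) : ℚ_[2]) v ↔ (v % 8 = 1 ∨ (2 * u + v) % 8 = 1) := by
  constructor
  · intro h
    obtain ⟨x, y, z, h, h1⟩ := h.primitive
    have hz := congrArg (PadicInt.toZModPow (p := 2) 3) h
    simp only [map_add, map_mul, map_pow, map_intCast, Int.cast_mul, Int.cast_ofNat,
      map_ofNat] at hz
    have h1' : PadicInt.toZModPow (p := 2) 3 x = 1 ∨ PadicInt.toZModPow (p := 2) 3 y = 1 ∨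
        PadicInt.toZModPow (p := 2) 3 z = 1 := by
      rcases h1 with rfl | rfl | rfl <;> simp
    have e : ∀ w : ℤ, ¬ 2 ∣ w → (w : ZMod (2 ^ 3)) * w = 1 := by
      intro w hw
      have := (ZMod.intCast_eq_intCast_iff_dvd_sub (w * w) 1 (2 ^ 3)).2 (by
        obtain ⟨k, rfl⟩ : ∃ k, w = 2 * k + 1 := ⟨w / 2, by omega⟩
        obtain ⟨j, hj⟩ := Int.even_mul_succ_self k
        exact ⟨-j, by push_cast; linear_combination (-4) * hj⟩)
      simpa using this
    have := zmod_eight_fact _ _ _ _ _ (e u hu) (e v hv) h1' hz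
    have e1 : ∀ w : ℤ, (w : ZMod (2 ^ 3)) = 1 → w % 8 = 1 := by
      intro w hw
      have := (ZMod.intCast_eq_intCast_iff_dvd_sub w 1 (2 ^ 3)).1 (by simpa using hw)
      norm_num at this; omega
    rcases this with h | h
    · exact Or.inl (e1 _ h)
    · exact Or.inr (e1 _ (by push_cast; exact h))
  · rintro (h | h)
    · exact ConicSol.of_sqrt (x := 0) (y := 1) (by simp) (padic_sqrt_two (by omega))
    · exact ConicSol.of_sqrt (x := 1) (y := 1) (by simp) (padic_sqrt_two (by omega))

end Local

/-! ### The closed formula for the Hilbert symbol -/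

/-- The prime-to-`p` part of an integer (sign included). -/
def unitPart (p : ℕ) (a : ℤ) : ℤ := a / (p : ℤ) ^ padicValInt p a

/-- The symbol `(p, u)` at `p` of a `p`-adic unit `u`: the Legendre symbol for odd `p`, and
`(-1) ^ ((u² - 1) / 8)` for `p = 2`. -/
def unitChar (p : ℕ) (u : ℤ) : ℤ := if p = 2 then ZMod.χ₈ u else jacobiSym u p

/-- The symbol of two `p`-adic units: `(-1) ^ ((u - 1) / 2 * (v - 1) / 2)` for `p = 2`, trivial for
odd `p`. -/
def unitSym (p : ℕ) (u v : ℤ) : ℤ := if p = 2 ∧ u % 4 = 3 ∧ v % 4 = 3 then -1 else 1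

/-- The symbol `(p, p)` at `p`: the Legendre symbol of `-1` for odd `p`, and `1` for `p = 2`. -/
def selfSym (p : ℕ) : ℤ := if p = 2 then 1 else jacobiSym (-1) p

/-- The Hilbert symbol at `p` of two nonzero integers, given by its closed formula. -/
def hilbertSym (p : ℕ) (a b : ℤ) : ℤ :=
  unitSym p (unitPart p a) (unitPart p b) * selfSym p ^ (padicValInt p a * padicValInt p b) *
    unitChar p (unitPart p a) ^ padicValInt p b * unitChar p (unitPart p b) ^ padicValInt p a

theorem pow_mul_unitPart (p : ℕ) (a : ℤ) : (p : ℤ) ^ padicValInt p a * unitPart p a = a :=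
  Int.mul_ediv_cancel' (padicValInt_dvd a)

theorem hilbertSym_comm (p : ℕ) (a b : ℤ) : hilbertSym p a b = hilbertSym p b a := by
  have : ∀ u v, unitSym p u v = unitSym p v u := fun u v => by
    unfold unitSym; congr 1; simp only [eq_iff_iff]; tauto
  unfold hilbertSym
  rw [this, mul_comm (padicValInt p a)]
  ring

theorem unitChar_mul (p : ℕ) (u v : ℤ) : unitChar p (u * v) = unitChar p u * unitChar p v := by
  unfold unitChar
  split_ifs
  · push_cast; rw [map_mul]
  · exact jacobiSym.mul_left _ _ _

theorem unitSym_sign (p : ℕ) (u v : ℤ) : unitSym p u v = 1 ∨ unitSym p u v = -1 := by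
  unfold unitSym; split_ifs <;> simp

section Formula

variable {p : ℕ} [hpf : Fact p.Prime]

theorem not_dvd_unitPart {a : ℤ} (ha : a ≠ 0) : ¬ (p : ℤ) ∣ unitPart p a := by
  rintro ⟨c, hc⟩
  have h : (p : ℤ) ^ (padicValInt p a + 1) ∣ a :=
    ⟨c, by conv_lhs => rw [← pow_mul_unitPart p a, hc]
           ring⟩
  rw [padicValInt_dvd_iff] at h
  omega

theorem padicValInt_pow_mul {n : ℕ} {u : ℤ} (hu : ¬ (p : ℤ) ∣ u) :
    padicValInt p ((p : ℤ) ^ n * u) = n := by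
  have hp0 : (p : ℤ) ≠ 0 := by exact_mod_cast hpf.out.ne_zero
  have hu0 : u ≠ 0 := by rintro rfl; simp at hu
  rw [padicValInt.mul (pow_ne_zero _ hp0) hu0, padicValInt.eq_zero_of_not_dvd hu]
  simp [padicValInt, Int.natAbs_pow]

theorem unitPart_pow_mul {n : ℕ} {u : ℤ} (hu : ¬ (p : ℤ) ∣ u) :
    unitPart p ((p : ℤ) ^ n * u) = u := by
  have hp0 : (p : ℤ) ≠ 0 := by exact_mod_cast hpf.out.ne_zero
  rw [unitPart, padicValInt_pow_mul hu, Int.mul_ediv_cancel_left _ (pow_ne_zero _ hp0)]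

theorem hilbertSym_eq {m n : ℕ} {u v : ℤ} (hu : ¬ (p : ℤ) ∣ u) (hv : ¬ (p : ℤ) ∣ v) :
    hilbertSym p ((p : ℤ) ^ m * u) ((p : ℤ) ^ n * v) =
      unitSym p u v * selfSym p ^ (m * n) * unitChar p u ^ n * unitChar p v ^ m := by
  simp only [hilbertSym, unitPart_pow_mul hu, unitPart_pow_mul hv, padicValInt_pow_mul hu,
    padicValInt_pow_mul hv]

theorem not_dvd_mul {u v : ℤ} (hu : ¬ (p : ℤ) ∣ u) (hv : ¬ (p : ℤ) ∣ v) : ¬ (p : ℤ) ∣ u * v :=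
  fun h => ((Nat.prime_iff_prime_int.1 hpf.out).dvd_or_dvd h).elim hu hv

theorem unitSym_mul {u v w : ℤ} (hu : ¬ (p : ℤ) ∣ u) (hv : ¬ (p : ℤ) ∣ v) (hw : ¬ (p : ℤ) ∣ w) :
    unitSym p (u * v) w = unitSym p u w * unitSym p v w := by
  by_cases hp : p = 2
  · subst hp
    have hu' : u % 4 = 1 ∨ u % 4 = 3 := by omega
    have hv' : v % 4 = 1 ∨ v % 4 = 3 := by omega
    have hw' : w % 4 = 1 ∨ w % 4 = 3 := by omega
    unfold unitSym
    rw [Int.mul_emod]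
    rcases hu' with h | h <;> rcases hv' with h' | h' <;> rcases hw' with h'' | h'' <;>
      simp [h, h', h'']
  · simp [unitSym, hp]

theorem hilbertSym_mul_left {a a' b : ℤ} (ha : a ≠ 0) (ha' : a' ≠ 0) (hb : b ≠ 0) :
    hilbertSym p (a * a') b = hilbertSym p a b * hilbertSym p a' b := by
  have hu := not_dvd_unitPart (p := p) ha
  have hu' := not_dvd_unitPart (p := p) ha'
  have hv := not_dvd_unitPart (p := p) hb
  rw [← pow_mul_unitPart p a, ← pow_mul_unitPart p a',
    ← pow_mul_unitPart p b]
  generalize unitPart p a = u at *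
  generalize unitPart p a' = u' at *
  generalize unitPart p b = v at *
  generalize padicValInt p a = m
  generalize padicValInt p a' = m'
  generalize padicValInt p b = n
  have e : (p : ℤ) ^ m * u * (p ^ m' * u') = p ^ (m + m') * (u * u') := by ring
  rw [e, hilbertSym_eq (not_dvd_mul hu hu') hv, hilbertSym_eq hu hv, hilbertSym_eq hu' hv,
    unitChar_mul, unitSym_mul hu hu' hv]
  ring

theorem jacobiSym_prime_sign {u : ℤ} (hu : ¬ (p : ℤ) ∣ u) :
    jacobiSym u p = 1 ∨ jacobiSym u p = -1 := by
  rw [← jacobiSym.legendreSym.to_jacobiSym]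
  exact legendreSym.eq_one_or_neg_one p (int_cast_zmod_ne_zero hu)

theorem unitChar_sign {u : ℤ} (hu : ¬ (p : ℤ) ∣ u) : unitChar p u = 1 ∨ unitChar p u = -1 := by
  by_cases hp : p = 2
  · subst hp
    have : u % 2 ≠ 0 := by omega
    simp only [unitChar, if_true, ZMod.χ₈_int_eq_if_mod_eight, this, if_false]
    split_ifs <;> simp
  · simpa only [unitChar, hp, if_false] using jacobiSym_prime_sign hu

theorem not_dvd_neg_one : ¬ (p : ℤ) ∣ -1 := by
  rw [Int.dvd_neg]
  exact (Nat.prime_iff_prime_int.1 hpf.out).not_dvd_one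

theorem selfSym_sign : selfSym p = 1 ∨ selfSym p = -1 := by
  unfold selfSym
  split_ifs
  · exact Or.inl rfl
  · exact jacobiSym_prime_sign not_dvd_neg_one

theorem hilbertSym_sign {a b : ℤ} (ha : a ≠ 0) (hb : b ≠ 0) :
    hilbertSym p a b = 1 ∨ hilbertSym p a b = -1 := by
  simp only [← Int.isUnit_iff]
  unfold hilbertSym
  have h1 := Int.isUnit_iff.2 (unitChar_sign (not_dvd_unitPart (p := p) ha))
  have h2 := Int.isUnit_iff.2 (unitChar_sign (not_dvd_unitPart (p := p) hb))
  have h3 := Int.isUnit_iff.2 (selfSym_sign (p := p))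
  have h4 := Int.isUnit_iff.2 (unitSym_sign p (unitPart p a) (unitPart p b))
  exact ((h4.mul (h3.pow _)).mul (h1.pow _)).mul (h2.pow _)

theorem conicSol_unit_unit {u v : ℤ} (hu : ¬ (p : ℤ) ∣ u) (hv : ¬ (p : ℤ) ∣ v) :
    ConicSol (u : ℚ_[p]) v ↔ unitSym p u v = 1 := by
  by_cases hp : p = 2
  · subst hp
    rw [conicSol_two_unit_unit (by exact_mod_cast hu) (by exact_mod_cast hv)]
    unfold unitSym
    split_ifs with h <;> simp_all
  · simp [unitSym, hp, conicSol_odd_unit_unit hp hu hv]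

theorem conicSol_p_unit {u v : ℤ} (hu : ¬ (p : ℤ) ∣ u) (hv : ¬ (p : ℤ) ∣ v) :
    ConicSol ((p * u : ℤ) : ℚ_[p]) v ↔ unitSym p u v * unitChar p v = 1 := by
  by_cases hp : p = 2
  · subst hp
    have h := conicSol_two_two_unit (u := u) (v := v) (by exact_mod_cast hu) (by exact_mod_cast hv)
    rw [Nat.cast_ofNat, h]
    have hu2 : u % 8 = 1 ∨ u % 8 = 3 ∨ u % 8 = 5 ∨ u % 8 = 7 := by omega
    have hv2 : v % 8 = 1 ∨ v % 8 = 3 ∨ v % 8 = 5 ∨ v % 8 = 7 := by omega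
    have hv3 : v % 2 ≠ 0 := by omega
    simp only [unitSym, unitChar, ZMod.χ₈_int_eq_if_mod_eight, if_true, true_and, hv3, if_false]
    split_ifs <;> norm_num <;> omega
  · rw [conicSol_odd_p_unit hp hu hv]
    simp [unitSym, unitChar, hp]

/-- Reduction to `conicSol_p_unit` through `(pu, pv) ↦ (pv, -p²uv)`. -/
theorem conicSol_p_p {u v : ℤ} (hu : ¬ (p : ℤ) ∣ u) (hv : ¬ (p : ℤ) ∣ v) :
    ConicSol ((p * u : ℤ) : ℚ_[p]) ((p * v : ℤ) : ℚ_[p]) ↔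
      unitSym p u v * selfSym p * unitChar p u * unitChar p v = 1 := by
  have hp0 : (p : ℚ_[p]) ≠ 0 := by exact_mod_cast hpf.out.ne_zero
  have hu0 : (u : ℚ_[p]) ≠ 0 := by
    intro h; apply hu; rw [Int.cast_eq_zero.1 h]; exact dvd_zero _
  have hv0 : (v : ℚ_[p]) ≠ 0 := by
    intro h; apply hv; rw [Int.cast_eq_zero.1 h]; exact dvd_zero _
  have hw : ¬ (p : ℤ) ∣ -(u * v) := by rw [Int.dvd_neg]; exact not_dvd_mul hu hv
  rw [ConicSol.rotate_iff (by push_cast; exact mul_ne_zero hp0 hu0)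
    (by push_cast; exact mul_ne_zero hp0 hv0)]
  have e : -(((p * u : ℤ) : ℚ_[p]) * ((p * v : ℤ) : ℚ_[p])) =
    ((-(u * v) : ℤ) : ℚ_[p]) * (p : ℚ_[p]) ^ 2 := by push_cast; ring
  rw [e, ConicSol.sq_right hp0, conicSol_p_unit hv hw]
  suffices h : unitSym p v (-(u * v)) * unitChar p (-(u * v)) =
      unitSym p u v * selfSym p * unitChar p u * unitChar p v by rw [h]
  by_cases hp : p = 2
  · subst hp
    have hu2 : u % 8 = 1 ∨ u % 8 = 3 ∨ u % 8 = 5 ∨ u % 8 = 7 := by omega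
    have hv2 : v % 8 = 1 ∨ v % 8 = 3 ∨ v % 8 = 5 ∨ v % 8 = 7 := by omega
    have e1 : unitChar 2 (-(u * v)) = unitChar 2 u * unitChar 2 v := by
      rw [← neg_one_mul, unitChar_mul, unitChar_mul]
      have : unitChar 2 (-1) = 1 := by decide
      rw [this, one_mul]
    have e2 : unitSym 2 v (-(u * v)) = unitSym 2 u v := by
      have h8 : (u * v) % 8 = ((u % 8) * (v % 8)) % 8 := Int.mul_emod _ _ _
      unfold unitSym
      rcases hu2 with h | h | h | h <;> rcases hv2 with h' | h' | h' | h' <;>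
        rw [h, h'] at h8 <;> norm_num at h8 <;> split_ifs <;> first | rfl | omega
    rw [e1, e2]
    simp [selfSym, mul_assoc]
  · rw [← neg_one_mul, unitChar_mul, unitChar_mul]
    simp [unitSym, selfSym, unitChar, hp, mul_assoc]

theorem sign_pow_even {x : ℤ} (hx : x = 1 ∨ x = -1) (k : ℕ) : x ^ (2 * k) = 1 := by
  rcases hx with rfl | rfl <;> simp

/-- The closed formula decides solvability: both sides depend only on the valuations mod `2`. -/
theorem conicSol_iff_hilbertSym {a b : ℤ} (ha : a ≠ 0) (hb : b ≠ 0) :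
    ConicSol (a : ℚ_[p]) b ↔ hilbertSym p a b = 1 := by
  have hu := not_dvd_unitPart (p := p) ha
  have hv := not_dvd_unitPart (p := p) hb
  rw [← pow_mul_unitPart p a, ← pow_mul_unitPart p b]
  generalize unitPart p a = u at *
  generalize unitPart p b = v at *
  generalize padicValInt p a = m
  generalize padicValInt p b = n
  rw [hilbertSym_eq hu hv]
  have hp0 : (p : ℚ_[p]) ≠ 0 := by exact_mod_cast hpf.out.ne_zero
  have red0 : ∀ (k : ℕ) (w : ℤ), (((p : ℤ) ^ (2 * k) * w : ℤ) : ℚ_[p]) =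
      (w : ℚ_[p]) * ((p : ℚ_[p]) ^ k) ^ 2 := fun k w => by push_cast; ring
  have red1 : ∀ (k : ℕ) (w : ℤ), (((p : ℤ) ^ (2 * k + 1) * w : ℤ) : ℚ_[p]) =
      ((p * w : ℤ) : ℚ_[p]) * ((p : ℚ_[p]) ^ k) ^ 2 := fun k w => by push_cast; ring
  have hs := selfSym_sign (p := p)
  have hcu := unitChar_sign hu
  have hcv := unitChar_sign hv
  obtain ⟨k, rfl | rfl⟩ := m.even_or_odd' <;> obtain ⟨l, rfl | rfl⟩ := n.even_or_odd'
  · rw [red0, red0, ConicSol.sq_left (pow_ne_zero _ hp0), ConicSol.sq_right (pow_ne_zero _ hp0),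
      conicSol_unit_unit hu hv, mul_assoc 2 k, sign_pow_even hs, sign_pow_even hcu,
      sign_pow_even hcv]
    simp
  · rw [red0, red1, ConicSol.sq_left (pow_ne_zero _ hp0), ConicSol.sq_right (pow_ne_zero _ hp0),
      ConicSol.comm, conicSol_p_unit hv hu, mul_assoc 2 k, sign_pow_even hs, pow_succ,
      sign_pow_even hcu, sign_pow_even hcv]
    have : unitSym p v u = unitSym p u v := by
      unfold unitSym; congr 1; simp only [eq_iff_iff]; tauto
    rw [this]; simp
  · rw [red1, red0, ConicSol.sq_left (pow_ne_zero _ hp0), ConicSol.sq_right (pow_ne_zero _ hp0),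
      conicSol_p_unit hu hv, mul_left_comm, sign_pow_even hs, pow_succ (unitChar p v),
      sign_pow_even hcu, sign_pow_even hcv]
    simp
  · rw [red1, red1, ConicSol.sq_left (pow_ne_zero _ hp0), ConicSol.sq_right (pow_ne_zero _ hp0),
      conicSol_p_p hu hv]
    have : (2 * k + 1) * (2 * l + 1) = 2 * (2 * k * l + k + l) + 1 := by ring
    rw [this, pow_succ, pow_succ, pow_succ, sign_pow_even hs, sign_pow_even hcu,
      sign_pow_even hcv]
    simp

theorem hilbertSym_units {u v : ℤ} (hu : ¬ (p : ℤ) ∣ u) (hv : ¬ (p : ℤ) ∣ v) :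
    hilbertSym p u v = unitSym p u v := by
  simpa using hilbertSym_eq (m := 0) (n := 0) hu hv

theorem hilbertSym_p_unit {v : ℤ} (hv : ¬ (p : ℤ) ∣ v) :
    hilbertSym p p v = unitChar p v := by
  have h1 : ¬ (p : ℤ) ∣ 1 := (Nat.prime_iff_prime_int.1 hpf.out).not_dvd_one
  simpa [unitSym] using hilbertSym_eq (m := 1) (n := 0) h1 hv

theorem hilbertSym_p_p : hilbertSym p p p = selfSym p := by
  have h1 : ¬ (p : ℤ) ∣ 1 := (Nat.prime_iff_prime_int.1 hpf.out).not_dvd_one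
  have := hilbertSym_eq (m := 1) (n := 1) h1 h1
  have h2 : unitChar p 1 = 1 := by unfold unitChar; split_ifs <;> simp
  simpa [h2, unitSym] using this

theorem hilbertSym_eq_one {a b : ℤ} (h : ¬ (p : ℤ) ∣ 2 * a * b) : hilbertSym p a b = 1 := by
  have ha : ¬ (p : ℤ) ∣ a := fun hd => h ((hd.mul_left 2).mul_right b)
  have hb : ¬ (p : ℤ) ∣ b := fun hd => h (hd.mul_left _)
  have hp : p ≠ 2 := by rintro rfl; exact h ⟨a * b, by push_cast; ring⟩
  rw [hilbertSym_units ha hb]; simp [unitSym, hp]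

end Formula

/-! ### The product formula -/

/-- The Hilbert symbol at the real place. -/
def realSym (a b : ℤ) : ℤ := if a < 0 ∧ b < 0 then -1 else 1

/-- The product formula for `(a, b)`. All symbols at primes not dividing `2ab` are trivial, so
every finite set `S` containing the prime divisors of `2ab` is used; this makes the
multiplicativity in `a` immediate. -/
def ProductFormula (a b : ℤ) : Prop :=
  ∀ S : Finset Nat.Primes, (∀ p : Nat.Primes, (p : ℤ) ∣ 2 * a * b → p ∈ S) →
    realSym a b * ∏ p ∈ S, hilbertSym p a b = 1

namespace ProductFormula

local instance factPrimes (p : Nat.Primes) : Fact (p : ℕ).Prime := ⟨p.2⟩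

theorem symm {a b : ℤ} (h : ProductFormula a b) : ProductFormula b a := by
  intro S hS
  have := h S fun p hp => hS p (by rwa [mul_right_comm])
  simp only [hilbertSym_comm _ b a]
  rwa [show realSym b a = realSym a b by unfold realSym; congr 1; simp only [eq_iff_iff]; tauto]

theorem mul {a a' b : ℤ} (ha : a ≠ 0) (ha' : a' ≠ 0) (hb : b ≠ 0) (h : ProductFormula a b)
    (h' : ProductFormula a' b) : ProductFormula (a * a') b := by
  intro S hS
  have h1 := h S fun p hp => hS p (hp.trans ⟨a', by ring⟩)
  have h2 := h' S fun p hp => hS p (hp.trans ⟨a, by ring⟩)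
  have hr : realSym (a * a') b = realSym a b * realSym a' b := by
    unfold realSym
    rcases lt_or_gt_of_ne ha with h | h <;> rcases lt_or_gt_of_ne ha' with h' | h' <;>
      by_cases hb : b < 0 <;>
      simp [h, h', hb, mul_neg_iff, not_lt_of_gt]
  simp only [hilbertSym_mul_left ha ha' hb, Finset.prod_mul_distrib, hr]
  linear_combination h1 * (realSym a' b * ∏ p ∈ S, hilbertSym p a' b) + h2

theorem of_subset {a b : ℤ} (S₀ : Finset Nat.Primes) (h0 : ∀ p ∈ S₀, (p : ℤ) ∣ 2 * a * b)
    (h1 : ∀ p : Nat.Primes, p ∉ S₀ → hilbertSym p a b = 1)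
    (h : realSym a b * ∏ p ∈ S₀, hilbertSym p a b = 1) : ProductFormula a b := by
  intro S hS
  rwa [← Finset.prod_subset (fun p hp => hS p (h0 p hp)) fun p _ hp => h1 p hp]

/-- For `b ≠ 0` multiplicativity gives `(1, b)² = (1, b)`, hence `(1, b) = 1`. -/
theorem one_left (b : ℤ) : ProductFormula 1 b := by
  refine of_subset ∅ (by simp) (fun p _ => ?_) (by simp [realSym])
  by_cases hb : b = 0
  · subst hb
    simp [hilbertSym, unitSym, unitChar, unitPart]
  · have := hilbertSym_mul_left (p := p) one_ne_zero one_ne_zero hb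
    rw [mul_one] at this
    rcases hilbertSym_sign (p := p) one_ne_zero hb with h | h
    · exact h
    · rw [h] at this; norm_num at this

/-- The prime `2`. -/
def twoPrime : Nat.Primes := ⟨2, Nat.prime_two⟩

theorem twoPrime_dvd (a b : ℤ) : (twoPrime : ℤ) ∣ 2 * a * b := ⟨a * b, mul_assoc 2 a b⟩

theorem unitSym_twoPrime (u v : ℤ) :
    unitSym twoPrime u v = if u % 4 = 3 ∧ v % 4 = 3 then -1 else 1 := by
  simp [unitSym, twoPrime]

theorem dvd_prime_iff (p q : Nat.Primes) : (p : ℤ) ∣ (q : ℤ) ↔ p = q := by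
  rw [Int.natCast_dvd_natCast, Nat.prime_dvd_prime_iff_eq p.2 q.2]
  exact Nat.Primes.coe_nat_inj p q

theorem not_dvd_neg {p : Nat.Primes} : ¬ ((p : ℕ) : ℤ) ∣ -1 := not_dvd_neg_one

theorem ne_two_of_ne {p : Nat.Primes} (h : p ≠ twoPrime) : (p : ℕ) ≠ 2 :=
  fun h' => h (Subtype.ext h')

theorem neg_one_neg_one : ProductFormula (-1) (-1) := by
  refine of_subset {twoPrime}
    (fun p hp => by rw [Finset.mem_singleton.1 hp]; exact twoPrime_dvd _ _) (fun p hp => ?_) ?_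
  · have := ne_two_of_ne (by simpa using hp)
    rw [hilbertSym_units not_dvd_neg not_dvd_neg]
    simp [unitSym, this]
  · rw [Finset.prod_singleton, hilbertSym_units not_dvd_neg not_dvd_neg]
    decide

theorem odd_of_ne {p : Nat.Primes} (h : p ≠ twoPrime) : (p : ℕ) % 2 = 1 :=
  p.2.mod_two_eq_one_iff_ne_two.2 (ne_two_of_ne h)

theorem unitSym_of_ne {p : Nat.Primes} (h : p ≠ twoPrime) (u v : ℤ) : unitSym p u v = 1 := by
  simp [unitSym, ne_two_of_ne h]

theorem unitChar_of_ne {p : Nat.Primes} (h : p ≠ twoPrime) (u : ℤ) :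
    unitChar p u = jacobiSym u p := by
  simp [unitChar, ne_two_of_ne h]

theorem realSym_prime (a : ℤ) (q : Nat.Primes) : realSym a q = 1 := by
  simp [realSym]

theorem jacobiSym_neg_one_eq {n : ℕ} (hn : n % 2 = 1) :
    jacobiSym (-1) n = if n % 4 = 3 then -1 else 1 := by
  rw [jacobiSym.at_neg_one (Nat.odd_iff.2 hn), ZMod.χ₄_nat_eq_if_mod_four]
  split_ifs <;> first | rfl | omega

/-- First supplementary law. -/
theorem neg_one_prime (q : Nat.Primes) : ProductFormula (-1) q := by
  by_cases hq : q = twoPrime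
  · subst hq
    refine of_subset {twoPrime}
      (fun p hp => by rw [Finset.mem_singleton.1 hp]; exact twoPrime_dvd _ _) (fun p hp => ?_) ?_
    · have hp : p ≠ twoPrime := by simpa using hp
      rw [hilbertSym_units not_dvd_neg (by rwa [dvd_prime_iff]), unitSym_of_ne hp]
    · rw [Finset.prod_singleton, hilbertSym_comm, hilbertSym_p_unit not_dvd_neg]
      decide
  · refine of_subset {twoPrime, q} ?_ (fun p hp => ?_) ?_
    · simp only [Finset.mem_insert, Finset.mem_singleton, forall_eq_or_imp, forall_eq]
      exact ⟨twoPrime_dvd _ _, dvd_mul_left _ _⟩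
    · simp only [Finset.mem_insert, Finset.mem_singleton, not_or] at hp
      rw [hilbertSym_units not_dvd_neg (by rw [dvd_prime_iff]; exact hp.2), unitSym_of_ne hp.1]
    · rw [Finset.prod_pair (Ne.symm hq),
        hilbertSym_units not_dvd_neg (by rw [dvd_prime_iff]; exact Ne.symm hq),
        hilbertSym_comm, hilbertSym_p_unit not_dvd_neg, realSym_prime, unitChar_of_ne hq,
        jacobiSym_neg_one_eq (odd_of_ne hq)]
      rw [unitSym_twoPrime]
      split_ifs <;> first | rfl | omega

/-- The symbols of `(q, q)` agree with those of `(-1, q)`, so this is again the first supplementary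
law. -/
theorem prime_self (q : Nat.Primes) : ProductFormula q q := by
  by_cases hq : q = twoPrime
  · subst hq
    refine of_subset {twoPrime}
      (fun p hp => by rw [Finset.mem_singleton.1 hp]; exact twoPrime_dvd _ _) (fun p hp => ?_) ?_
    · have hp : p ≠ twoPrime := by simpa using hp
      rw [hilbertSym_units (by rwa [dvd_prime_iff]) (by rwa [dvd_prime_iff]), unitSym_of_ne hp]
    · rw [Finset.prod_singleton, hilbertSym_p_p]
      decide
  · refine of_subset {twoPrime, q} ?_ (fun p hp => ?_) ?_
    · simp only [Finset.mem_insert, Finset.mem_singleton, forall_eq_or_imp, forall_eq]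
      exact ⟨twoPrime_dvd _ _, dvd_mul_left _ _⟩
    · simp only [Finset.mem_insert, Finset.mem_singleton, not_or] at hp
      rw [hilbertSym_units (by rw [dvd_prime_iff]; exact hp.2) (by rw [dvd_prime_iff]; exact hp.2),
        unitSym_of_ne hp.1]
    · rw [Finset.prod_pair (Ne.symm hq), hilbertSym_units (by rw [dvd_prime_iff]; exact Ne.symm hq)
          (by rw [dvd_prime_iff]; exact Ne.symm hq), hilbertSym_p_p, realSym_prime]
      simp only [selfSym, ne_two_of_ne hq, if_false, jacobiSym_neg_one_eq (odd_of_ne hq)]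
      rw [unitSym_twoPrime]
      split_ifs <;> first | rfl | omega

/-- Second supplementary law. -/
theorem two_prime {q : Nat.Primes} (hq : q ≠ twoPrime) : ProductFormula twoPrime q := by
  refine of_subset {twoPrime, q} ?_ (fun p hp => ?_) ?_
  · simp only [Finset.mem_insert, Finset.mem_singleton, forall_eq_or_imp, forall_eq]
    exact ⟨twoPrime_dvd _ _, dvd_mul_left _ _⟩
  · simp only [Finset.mem_insert, Finset.mem_singleton, not_or] at hp
    rw [hilbertSym_units (by rw [dvd_prime_iff]; exact hp.1) (by rw [dvd_prime_iff]; exact hp.2),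
      unitSym_of_ne hp.1]
  · rw [Finset.prod_pair (Ne.symm hq), hilbertSym_p_unit (by rw [dvd_prime_iff]; exact Ne.symm hq),
      hilbertSym_comm, hilbertSym_p_unit (by rwa [dvd_prime_iff]), realSym_prime, unitChar_of_ne hq]
    have h2 := jacobiSym.at_two (Nat.odd_iff.2 (odd_of_ne hq))
    have hs := jacobiSym_prime_sign (p := q) (u := 2) (by
      have := (dvd_prime_iff q twoPrime).not.2 hq
      simpa [twoPrime] using this)
    simp only [unitChar, twoPrime, if_true, Nat.cast_ofNat, Int.cast_natCast]
    rw [← h2]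
    rcases hs with h | h <;> rw [h] <;> rfl

/-- Quadratic reciprocity. -/
theorem odd_primes {q r : Nat.Primes} (hq : q ≠ twoPrime) (hr : r ≠ twoPrime) (hqr : q ≠ r) :
    ProductFormula q r := by
  refine of_subset {twoPrime, q, r} ?_ (fun p hp => ?_) ?_
  · simp only [Finset.mem_insert, Finset.mem_singleton, forall_eq_or_imp, forall_eq]
    exact ⟨twoPrime_dvd _ _, (dvd_mul_left _ _).mul_right _, dvd_mul_left _ _⟩
  · simp only [Finset.mem_insert, Finset.mem_singleton, not_or] at hp
    rw [hilbertSym_units (by rw [dvd_prime_iff]; exact hp.2.1)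
      (by rw [dvd_prime_iff]; exact hp.2.2), unitSym_of_ne hp.1]
  · rw [Finset.prod_insert (by simp [Ne.symm hq, Ne.symm hr]), Finset.prod_pair hqr,
      hilbertSym_units (by rw [dvd_prime_iff]; exact Ne.symm hq)
        (by rw [dvd_prime_iff]; exact Ne.symm hr),
      hilbertSym_p_unit (by rwa [dvd_prime_iff]), hilbertSym_comm _ q r,
      hilbertSym_p_unit (by rw [dvd_prime_iff]; exact Ne.symm hqr), realSym_prime,
      unitChar_of_ne hq, unitChar_of_ne hr]
    have hs := jacobiSym_prime_sign (p := q) (u := r) (by rwa [dvd_prime_iff])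
    have hR := jacobiSym.quadratic_reciprocity_if (odd_of_ne hq) (odd_of_ne hr)
    have e : unitSym twoPrime q r = if (q : ℕ) % 4 = 3 ∧ (r : ℕ) % 4 = 3 then -1 else 1 := by
      rw [unitSym_twoPrime]
      congr 1
      simp only [eq_iff_iff]
      omega
    rw [e, ← hR]
    split_ifs <;> rcases hs with h | h <;> rw [h] <;> norm_num

theorem prime_prime (q r : Nat.Primes) : ProductFormula q r := by
  by_cases hqr : q = r
  · subst hqr; exact prime_self q
  by_cases hq : q = twoPrime
  · subst hq; exact two_prime (Ne.symm hqr)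
  by_cases hr : r = twoPrime
  · subst hr; exact (two_prime hq).symm
  exact odd_primes hq hr hqr

/-- Nonzero integers are generated multiplicatively by `-1` and the primes. -/
theorem int_induction {P : ℤ → Prop} (h1 : P 1) (hneg : P (-1)) (hp : ∀ q : Nat.Primes, P q)
    (hmul : ∀ a b, a ≠ 0 → b ≠ 0 → P a → P b → P (a * b)) (a : ℤ) (ha : a ≠ 0) : P a := by
  have hnat : ∀ n : ℕ, n ≠ 0 → P n := by
    intro n
    induction n using induction_on_primes with
    | zero => simp
    | one => simpa using h1
    | prime_mul p n pp ih =>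
      intro h
      have hn : n ≠ 0 := right_ne_zero_of_mul h
      push_cast
      exact hmul _ _ (by exact_mod_cast pp.ne_zero) (by exact_mod_cast hn) (hp ⟨p, pp⟩) (ih hn)
  obtain ⟨n, rfl | rfl⟩ := a.eq_nat_or_neg
  · exact hnat n (by simpa using ha)
  · have hn : n ≠ 0 := by simpa using ha
    rw [← neg_one_mul]
    exact hmul _ _ (by norm_num) (by exact_mod_cast hn) hneg (hnat n hn)

theorem all {a b : ℤ} (ha : a ≠ 0) (hb : b ≠ 0) : ProductFormula a b := by
  have prime_ne : ∀ q : Nat.Primes, ((q : ℕ) : ℤ) ≠ 0 := fun q => by exact_mod_cast q.2.ne_zero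
  have hneg : ∀ b : ℤ, b ≠ 0 → ProductFormula b (-1) :=
    int_induction (one_left _) neg_one_neg_one (fun q => (neg_one_prime q).symm)
      fun a b ha hb h h' => mul ha hb (by norm_num) h h'
  have hprime : ∀ (q : Nat.Primes) (b : ℤ), b ≠ 0 → ProductFormula b q := fun q =>
    int_induction (one_left _) (neg_one_prime q) (fun r => prime_prime r q)
      fun a b ha hb h h' => mul ha hb (prime_ne q) h h'
  refine int_induction (P := fun a => ProductFormula a b) (one_left _) (hneg b hb).symm
    (fun q => (hprime q b hb).symm) (fun a a' ha ha' h h' => mul ha ha' hb h h') a ha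

end ProductFormula

/-! ### Passage to rational coefficients and the real place -/

theorem conicSol_real (a b : ℤ) :
    ConicSol (a : ℝ) b ↔ realSym a b = 1 := by
  have hsqrt : ∀ a b : ℤ, 0 ≤ a → ConicSol (a : ℝ) b := fun a b h => by
    refine ⟨1, 0, √a, ?_, by simp⟩
    rw [Real.sq_sqrt (by exact_mod_cast h)]; ring
  unfold realSym
  split_ifs with h
  · refine iff_of_false ?_ (by norm_num)
    rintro ⟨x, y, z, hz, hn⟩
    have h1 : (a : ℝ) < 0 := by exact_mod_cast h.1
    have h2 : (b : ℝ) < 0 := by exact_mod_cast h.2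
    have hx : x ^ 2 = 0 := by nlinarith [sq_nonneg x, sq_nonneg y, sq_nonneg z]
    have hy : y ^ 2 = 0 := by nlinarith [sq_nonneg x, sq_nonneg y, sq_nonneg z]
    rw [hx, hy] at hz
    simp at hx hy hz
    exact hn ⟨hx, hy, hz⟩
  · simp only [iff_true]
    by_cases h' : 0 ≤ a
    · exact hsqrt a b h'
    · exact (hsqrt b a (by omega)).symm

/-- A rational number differs from the integer `num * den` by a square factor. -/
theorem conicSol_rat {K : Type*} [Field K] [CharZero K] (a b : ℚ) :
    ConicSol (a : K) b ↔ ConicSol ((a.num * a.den : ℤ) : K) ((b.num * b.den : ℤ) : K) := by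
  have h : ∀ a : ℚ, ((a.num * a.den : ℤ) : K) = (a : K) * (a.den : K) ^ 2 := fun a => by
    have hd : (a.den : K) ≠ 0 := by exact_mod_cast a.den_ne_zero
    conv_rhs => rw [Rat.cast_def]
    push_cast
    field_simp
  rw [h, h, ConicSol.sq_left (by exact_mod_cast a.den_ne_zero),
    ConicSol.sq_right (by exact_mod_cast b.den_ne_zero)]

theorem not_conicSol_iff {K : Type*} [Field K] (a b : K) : ¬ ConicSol a b ↔
    ∀ x y z : K, z ^ 2 = a * x ^ 2 + b * y ^ 2 → x = 0 ∧ y = 0 ∧ z = 0 := by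
  simp only [ConicSol, not_exists, not_and_not_right]

/-- The Hilbert symbol at an arbitrary place, `none` being the real one. -/
def placeSym (a b : ℤ) (v : Option Nat.Primes) : ℤ :=
  v.elim (realSym a b) fun p => hilbertSym p a b

theorem hilbert_reciprocity
    (a b : ℚ) (ha : a ≠ 0) (hb : b ≠ 0) :
    ∃ hfin : {v : Option Nat.Primes |
        match v with
        | none => ∀ x y z : ℝ, z ^ 2 = a * x ^ 2 + b * y ^ 2 →
            x = 0 ∧ y = 0 ∧ z = 0
        | some p => ∀ x y z : @Padic (p : ℕ) ⟨p.2⟩,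
            z ^ 2 = a * x ^ 2 + b * y ^ 2 → x = 0 ∧ y = 0 ∧ z = 0}.Finite,
      Even hfin.toFinset.card := by
  set A : ℤ := a.num * a.den with hA
  set B : ℤ := b.num * b.den with hB
  have hA0 : A ≠ 0 := mul_ne_zero (Rat.num_ne_zero.2 ha) (by exact_mod_cast a.den_ne_zero)
  have hB0 : B ≠ 0 := mul_ne_zero (Rat.num_ne_zero.2 hb) (by exact_mod_cast b.den_ne_zero)
  have hsign : ∀ v, placeSym A B v = 1 ∨ placeSym A B v = -1 := by
    rintro (_ | p)
    · simp only [placeSym, Option.elim, realSym]; split_ifs <;> simp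
    · have : Fact (p : ℕ).Prime := ⟨p.2⟩
      exact hilbertSym_sign hA0 hB0
  have hset : {v : Option Nat.Primes |
        match v with
        | none => ∀ x y z : ℝ, z ^ 2 = a * x ^ 2 + b * y ^ 2 →
            x = 0 ∧ y = 0 ∧ z = 0
        | some p => ∀ x y z : @Padic (p : ℕ) ⟨p.2⟩,
            z ^ 2 = a * x ^ 2 + b * y ^ 2 → x = 0 ∧ y = 0 ∧ z = 0} =
      {v | placeSym A B v ≠ 1} := by
    ext v
    rcases v with _ | p
    · exact (not_conicSol_iff (a : ℝ) b).symm.trans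
        ((conicSol_rat a b).trans (conicSol_real A B)).not
    · have : Fact (p : ℕ).Prime := ⟨p.2⟩
      exact (not_conicSol_iff (a : ℚ_[p]) b).symm.trans
        ((conicSol_rat a b).trans (conicSol_iff_hilbertSym hA0 hB0)).not
  rw [hset]
  have hfinS : {p : Nat.Primes | (p : ℤ) ∣ 2 * A * B}.Finite := by
    have hN : 2 * A * B ≠ 0 := mul_ne_zero (mul_ne_zero two_ne_zero hA0) hB0
    refine Set.Finite.of_finite_image (f := fun p : Nat.Primes => (p : ℕ)) ?_
      Subtype.val_injective.injOn
    refine (Set.finite_Iic (2 * A * B).natAbs).subset ?_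
    rintro _ ⟨p, hp, rfl⟩
    exact Nat.le_of_dvd (Int.natAbs_pos.2 hN) (Int.natCast_dvd.1 hp)
  set S := hfinS.toFinset
  have hmem : ∀ p : Nat.Primes, (p : ℤ) ∣ 2 * A * B → p ∈ S := fun p hp => by simpa [S] using hp
  have hprod : ∏ v ∈ S.insertNone, placeSym A B v = 1 := by
    rw [Finset.prod_insertNone]
    exact ProductFormula.all hA0 hB0 S hmem
  have hsub : ∀ v, placeSym A B v ≠ 1 → v ∈ S.insertNone := by
    rintro (_ | p) hv
    · simp
    · have : Fact (p : ℕ).Prime := ⟨p.2⟩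
      rw [Finset.some_mem_insertNone]
      by_contra hp
      exact hv (hilbertSym_eq_one fun h => hp (hmem p h))
  have hfin : {v | placeSym A B v ≠ 1}.Finite := S.insertNone.finite_toSet.subset hsub
  refine ⟨hfin, ?_⟩
  have hsubset : hfin.toFinset ⊆ S.insertNone := fun v hv => hsub v (by simpa using hv)
  rw [← Finset.prod_subset hsubset (fun v _ hv => by simpa using hv),
    Finset.prod_congr rfl (g := fun _ => (-1 : ℤ))
      (fun v hv => (hsign v).resolve_left (by simpa using hv)), Finset.prod_const] at hprod
  exact (neg_one_pow_eq_one_iff_even (by norm_num)).1 hprod
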